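/- Fix τ ∈ ℍ and z ∈ ℂ with z ∉ ℤ+τℤ and 2z ∉ ℤ+τℤ. Define F₄(t) = [θ(t+z)θ'(0)/(θ(t)θ(z))]² · [θ(t−z)θ'(0)/(θ(t)θ(−z))] · [θ(t+2z)θ(z)/(θ(t+z)θ(2z))] · [θ(t−z)θ(z)/(θ(t+z)θ(−z))], a priori defined wherever all denominators are nonzero. Then: (i) F₄ extends to a holomorphic function on ℂ ∖ (ℤ+τℤ) (the apparent singularities at t ≡ −z mod ℤ+τℤ are removable); (ii) this extension is doubly periodic with respect to the lattice ℤ+τℤ; and (iii) the residue of F₄ at t = 0 vanishes, i.e., for all sufficiently small r > 0 the integral of F₄ over the positively oriented circle of radius r centered at 0 equals 0. -/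

import Mathlib

/-!
After cancelling `θ(t+z)²`, the function `F₄` becomes a constant times
`θ(t-z)² θ(t+2z) / θ(t)³` (`gF`), which is holomorphic wherever `θ(t) ≠ 0`, that is, off the
lattice (`th_ne_zero`). Numerator and denominator have the same factors of automorphy under
`t ↦ t + 1` and `t ↦ t + τ` (`th_add_one`, `th_add_tau`), because the shifts satisfy
`-z - z + 2z = 0`. Hence `gF` is doubly periodic.

For the residue, the integral of `gF` along the boundary of `[-1/2, 1/2] × [-Im τ/2, Im τ/2]` is
zero by periodicity alone (`rectInt_eq_zero_of_periodic`): this axis-parallel rectangle is a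
fundamental domain up to a horizontal shear, and the shear is harmless because of the period `1`.
The origin is the only lattice point in it, so there `gF = c₀/t³ + c₁/t² + c₂/t + m(t)` with `m`
holomorphic, where `m` is a triple divided difference. The terms `c₀/t³ + c₁/t²` have a primitive
and `m` integrates to zero by Cauchy's theorem, while the integral of `1/t` is nonzero; so `c₂ = 0`
(`residue_eq_zero_of_rectInt`). The remaining terms integrate to zero over every small circle.
-/

open Complex Topology Filter

/-- `q = e^{2πiτ}`. -/
noncomputable def jq (τ : ℂ) : ℂ := Complex.exp (2 * Real.pi * I * τ)

/-- The Jacobi theta function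
`θ(t,τ) = q^{1/8} · 2 sin(πt) · ∏_{n≥1}(1−qⁿ) · ∏_{n≥1}(1−qⁿe^{2πit})(1−qⁿe^{−2πit})`,
where `q^{1/8} = e^{πiτ/4}`. -/
noncomputable def jTheta (t τ : ℂ) : ℂ :=
  Complex.exp (Real.pi * I * τ / 4) * (2 * Complex.sin (Real.pi * t)) *
    (∏' n : ℕ, (1 - jq τ ^ (n + 1))) *
    (∏' n : ℕ, (1 - jq τ ^ (n + 1) * Complex.exp (2 * Real.pi * I * t)) *
      (1 - jq τ ^ (n + 1) * Complex.exp (-(2 * Real.pi * I * t))))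

/-- `θ(t)` with `τ` fixed. -/
noncomputable def th (τ t : ℂ) : ℂ := jTheta t τ

/-- `θ'(0)`, the derivative of `θ(·,τ)` at `t = 0`. -/
noncomputable def thd (τ : ℂ) : ℂ := deriv (fun t => jTheta t τ) 0

/-- Membership in the lattice `ℤ + τℤ`. -/
def inLat (τ t : ℂ) : Prop := ∃ m n : ℤ, t = (m : ℂ) + (n : ℂ) * τ

/-- The function `F₄` arising in Case 4 of the proof of birational invariance:
`F₄(t) = [θ(t+z)θ'(0)/(θ(t)θ(z))]²·[θ(t−z)θ'(0)/(θ(t)θ(−z))]·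
[θ(t+2z)θ(z)/(θ(t+z)θ(2z))]·[θ(t−z)θ(z)/(θ(t+z)θ(−z))]`. -/
noncomputable def F₄ (τ z t : ℂ) : ℂ :=
  (th τ (t + z) * thd τ / (th τ t * th τ z)) ^ 2 *
  (th τ (t - z) * thd τ / (th τ t * th τ (-z))) *
  (th τ (t + 2 * z) * th τ z / (th τ (t + z) * th τ (2 * z))) *
  (th τ (t - z) * th τ z / (th τ (t + z) * th τ (-z)))

/-! ### The theta function: convergence, zeros and quasi-periodicity -/

/-- The one-sided product `∏_{n ≥ 1} (1 - qⁿ w)`. -/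
noncomputable def qp (q w : ℂ) : ℂ := ∏' n : ℕ, (1 - q ^ (n + 1) * w)

lemma summable_qp {q : ℂ} (hq : ‖q‖ < 1) (w : ℂ) :
    Summable fun n : ℕ => ‖-(q ^ (n + 1) * w)‖ := by
  simp only [norm_neg, norm_mul, norm_pow]
  exact ((summable_nat_add_iff 1).mpr
    (summable_geometric_of_lt_one (norm_nonneg _) hq)).mul_right _

lemma multipliable_qp {q : ℂ} (hq : ‖q‖ < 1) (w : ℂ) :
    Multipliable fun n : ℕ => 1 - q ^ (n + 1) * w := by
  simpa [sub_eq_add_neg] using multipliable_one_add_of_summable (summable_qp hq w)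

lemma qp_step {q : ℂ} (hq : ‖q‖ < 1) (w : ℂ) : qp q w = (1 - q * w) * qp q (q * w) := by
  have h : Multipliable fun n : ℕ => 1 - q ^ (n + 1 + 1) * w := by
    simpa [pow_succ, mul_assoc] using multipliable_qp hq (q * w)
  unfold qp
  rw [tprod_eq_zero_mul' (f := fun n : ℕ => 1 - q ^ (n + 1) * w) h]
  simp [pow_succ, mul_assoc]

lemma qp_ne_zero {q : ℂ} (hq : ‖q‖ < 1) {w : ℂ} (h : ∀ n : ℕ, 1 - q ^ (n + 1) * w ≠ 0) :
    qp q w ≠ 0 := by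
  have := tprod_one_add_ne_zero_of_summable (f := fun n : ℕ => -(q ^ (n + 1) * w))
    (by simpa [← sub_eq_add_neg] using h) (summable_qp hq w)
  simpa [qp, ← sub_eq_add_neg] using this

lemma differentiable_qp {q : ℂ} (hq : ‖q‖ < 1) : Differentiable ℂ (qp q) := by
  intro w₀
  have hs := (((summable_nat_add_iff 1).mpr
    (summable_geometric_of_lt_one (norm_nonneg q) hq)).mul_right (‖w₀‖ + 1))
  have h := Summable.hasProdLocallyUniformlyOn_nat_one_add
    (f := fun (n : ℕ) (w : ℂ) => -(q ^ (n + 1) * w))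
    (Metric.isOpen_ball (x := w₀) (ε := 1)) hs
    (Eventually.of_forall fun n w hw => by
      simp only [norm_neg, norm_mul, norm_pow]
      gcongr
      have h1 := norm_add_le w₀ (w - w₀)
      rw [mem_ball_iff_norm] at hw
      rw [add_sub_cancel] at h1
      linarith) (fun n => by fun_prop)
  have hd := h.differentiableOn (.of_forall fun _ => by
    simpa [Finset.prod_fn] using
      DifferentiableOn.finsetProd (fun _ _ => by fun_prop)) Metric.isOpen_ball
  have := hd.differentiableAt (Metric.ball_mem_nhds w₀ one_pos)
  unfold qp
  simp only [sub_eq_add_neg]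
  exact this

lemma norm_jq_lt_one {τ : ℂ} (hτ : 0 < τ.im) : ‖jq τ‖ < 1 :=
  UpperHalfPlane.norm_exp_two_pi_I_lt_one ⟨τ, hτ⟩

lemma th_eq {τ : ℂ} (hτ : 0 < τ.im) (t : ℂ) :
    th τ t = Complex.exp (Real.pi * I * τ / 4) * (2 * Complex.sin (Real.pi * t)) *
      qp (jq τ) 1 * (qp (jq τ) (exp (2 * Real.pi * I * t)) *
        qp (jq τ) (exp (-(2 * Real.pi * I * t)))) := by
  have hq := norm_jq_lt_one hτ
  simp only [th, jTheta, qp, mul_one]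
  rw [(multipliable_qp hq _).tprod_mul (multipliable_qp hq _)]

lemma differentiable_th {τ : ℂ} (hτ : 0 < τ.im) : Differentiable ℂ (th τ) := by
  have h := differentiable_qp (norm_jq_lt_one hτ)
  have e : th τ = _ := funext (th_eq hτ)
  rw [e]
  fun_prop

lemma th_zero (τ : ℂ) : th τ 0 = 0 := by simp [th, jTheta]

lemma inLat_of_exp_eq_one {τ t : ℂ} {n : ℤ} (h : exp (2 * Real.pi * I * (n * τ + t)) = 1) :
    inLat τ t := by
  obtain ⟨m, hm⟩ := Complex.exp_eq_one_iff.mp h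
  refine ⟨m, -n, ?_⟩
  have h2 : (2 * Real.pi * I : ℂ) ≠ 0 := Complex.two_pi_I_ne_zero
  have : (n * τ + t : ℂ) = m := mul_left_cancel₀ h2 (by rw [hm]; ring)
  push_cast
  linear_combination this

lemma jq_pow_mul_exp (τ t : ℂ) (n : ℕ) :
    jq τ ^ n * exp (2 * Real.pi * I * t) = exp (2 * Real.pi * I * ((n : ℤ) * τ + t)) := by
  rw [jq, ← Complex.exp_nat_mul, ← Complex.exp_add]
  congr 1
  push_cast
  ring

lemma inLat_neg {τ t : ℂ} (h : inLat τ (-t)) : inLat τ t := by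
  obtain ⟨m, n, h⟩ := h
  exact ⟨-m, -n, by push_cast; linear_combination -h⟩

lemma qp_exp_ne_zero {τ : ℂ} (hτ : 0 < τ.im) {t : ℂ}
    (h : ∀ n : ℕ, exp (2 * Real.pi * I * (((n + 1 : ℕ) : ℤ) * τ + t)) ≠ 1) :
    qp (jq τ) (exp (2 * Real.pi * I * t)) ≠ 0 := by
  refine qp_ne_zero (norm_jq_lt_one hτ) fun n hn => h n ?_
  rw [← jq_pow_mul_exp]
  linear_combination -hn

lemma qp_one_ne_zero {τ : ℂ} (hτ : 0 < τ.im) : qp (jq τ) 1 ≠ 0 := by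
  refine qp_ne_zero (norm_jq_lt_one hτ) fun n hn => ?_
  have h1 : jq τ ^ (n + 1) = 1 := by linear_combination -hn
  have h2 := pow_lt_one₀ (norm_nonneg _) (norm_jq_lt_one hτ) n.succ_ne_zero
  rw [← norm_pow, h1] at h2
  simp at h2

lemma th_ne_zero {τ : ℂ} (hτ : 0 < τ.im) {t : ℂ} (ht : ¬ inLat τ t) : th τ t ≠ 0 := by
  rw [th_eq hτ]
  have hs : Complex.sin (Real.pi * t) ≠ 0 := by
    rw [Complex.sin_ne_zero_iff]
    intro k hk
    refine ht ⟨k, 0, ?_⟩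
    have hpi : (Real.pi : ℂ) ≠ 0 := by exact_mod_cast Real.pi_ne_zero
    have := mul_left_cancel₀ hpi (hk.trans (mul_comm _ _))
    simp [this]
  have h1 := qp_exp_ne_zero hτ (t := t) fun n hn => ht (inLat_of_exp_eq_one hn)
  have h2 := qp_exp_ne_zero hτ (t := -t) fun n hn => ht (inLat_neg (inLat_of_exp_eq_one hn))
  rw [mul_neg] at h2
  exact mul_ne_zero (mul_ne_zero (mul_ne_zero (exp_ne_zero _) (mul_ne_zero two_ne_zero hs))
    (qp_one_ne_zero hτ)) (mul_ne_zero h1 h2)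

/-- The zero of `θ` at the origin is simple: the derivative there is
`2π q^{1/8} ∏ (1 - qⁿ)³`. -/
lemma deriv_th_zero_ne_zero {τ : ℂ} (hτ : 0 < τ.im) : deriv (th τ) 0 ≠ 0 := by
  have h := differentiable_qp (norm_jq_lt_one hτ)
  have e : th τ = fun t => Complex.sin (Real.pi * t) *
      (2 * Complex.exp (Real.pi * I * τ / 4) * qp (jq τ) 1 *
        (qp (jq τ) (exp (2 * Real.pi * I * t)) * qp (jq τ) (exp (-(2 * Real.pi * I * t))))) := by
    funext t
    rw [th_eq hτ]
    ring
  have hs : HasDerivAt (fun t : ℂ => Complex.sin (Real.pi * t)) Real.pi 0 := by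
    have := (((hasDerivAt_id (0 : ℂ)).const_mul (Real.pi : ℂ))).csin
    simpa using this
  have hd : DifferentiableAt ℂ (fun t : ℂ => 2 * Complex.exp (Real.pi * I * τ / 4) * qp (jq τ) 1 *
      (qp (jq τ) (exp (2 * Real.pi * I * t)) * qp (jq τ) (exp (-(2 * Real.pi * I * t))))) 0 := by
    fun_prop
  rw [e, (hs.fun_mul hd.hasDerivAt).deriv]
  have hpi : (Real.pi : ℂ) ≠ 0 := by exact_mod_cast Real.pi_ne_zero
  have := qp_one_ne_zero hτ
  simp [hpi, this, exp_ne_zero]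

lemma th_add_one {τ : ℂ} (hτ : 0 < τ.im) (t : ℂ) : th τ (t + 1) = -th τ t := by
  have h1 : exp (2 * Real.pi * I * (t + 1)) = exp (2 * Real.pi * I * t) := by
    rw [mul_add, mul_one, Complex.exp_add, Complex.exp_two_pi_mul_I, mul_one]
  have h2 : Complex.sin (Real.pi * (t + 1)) = -Complex.sin (Real.pi * t) := by
    rw [mul_add, mul_one, Complex.sin_add_pi]
  rw [th_eq hτ, th_eq hτ, Complex.exp_neg, Complex.exp_neg, h1, h2]
  ring

/-- Quasi-periodicity of `θ` along `τ`: replacing `w = e^{2πit}` by `q w` moves one factor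
between the two halves of the product. -/
lemma th_add_tau {τ : ℂ} (hτ : 0 < τ.im) (t : ℂ) :
    th τ (t + τ) = -exp (-(Real.pi * I * τ)) * exp (-(2 * Real.pi * I * t)) * th τ t := by
  have hq := norm_jq_lt_one hτ
  have hu : exp (Real.pi * I * t) ≠ 0 := exp_ne_zero _
  have hs : exp (Real.pi * I * τ) ≠ 0 := exp_ne_zero _
  have sinE : ∀ x : ℂ, Complex.sin (Real.pi * x) =
      ((exp (Real.pi * I * x))⁻¹ - exp (Real.pi * I * x)) * I / 2 := by
    intro x
    rw [Complex.sin, ← Complex.exp_neg]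
    congr 4 <;> ring_nf
  have sq : ∀ x : ℂ, exp (2 * Real.pi * I * x) = exp (Real.pi * I * x) ^ 2 := by
    intro x
    rw [← Complex.exp_nat_mul]
    congr 1
    push_cast
    ring
  have hadd : exp (Real.pi * I * (t + τ)) = exp (Real.pi * I * t) * exp (Real.pi * I * τ) := by
    rw [← Complex.exp_add]; ring_nf
  have hjq : jq τ = exp (Real.pi * I * τ) ^ 2 := sq τ
  rw [th_eq hτ, th_eq hτ, sinE, sinE]
  simp only [Complex.exp_neg, sq, hadd]
  set u := exp (Real.pi * I * t)
  set s := exp (Real.pi * I * τ)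
  have s1 := qp_step hq (u ^ 2)
  have s2 := qp_step hq (((u * s) ^ 2)⁻¹)
  have e1 : jq τ * u ^ 2 = (u * s) ^ 2 := by rw [hjq]; ring
  have e2 : jq τ * ((u * s) ^ 2)⁻¹ = (u ^ 2)⁻¹ := by rw [hjq]; field_simp
  rw [e1] at s1
  rw [e2] at s2
  rw [s1, s2]
  field_simp
  ring

/-! ### Integrals over the boundary of a rectangle -/

/-- The integral of `f` over the positively oriented boundary of the rectangle
`[-a, a] × [-b, b]`. -/
noncomputable def rectInt (a b : ℝ) (f : ℂ → ℂ) : ℂ :=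
  (∫ x in (-a)..a, f (x + (-b : ℝ) * I)) - (∫ x in (-a)..a, f (x + b * I)) +
    I * (∫ y in (-b)..b, f (a + y * I)) - I * (∫ y in (-b)..b, f ((-a : ℝ) + y * I))

/-- The closed rectangle `[-a, a] × [-b, b]` with its centre removed. -/
def pRect (a b : ℝ) : Set ℂ := {t | |t.re| ≤ a ∧ |t.im| ≤ b ∧ t ≠ 0}

lemma mem_pRect_h {a b x c : ℝ} (ha : 0 < a) (hb : 0 < b) (hx : x ∈ Set.uIcc (-a) a)
    (hc : |c| = b) : ((x + c * I : ℂ)) ∈ pRect a b := by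
  rw [Set.uIcc_of_le (by linarith)] at hx
  refine ⟨by simpa [abs_le] using hx, by simp [hc], fun h => ?_⟩
  have := congrArg Complex.im h
  simp at this
  simp [this] at hc
  linarith

lemma mem_pRect_v {a b y c : ℝ} (ha : 0 < a) (hb : 0 < b) (hy : y ∈ Set.uIcc (-b) b)
    (hc : |c| = a) : ((c + y * I : ℂ)) ∈ pRect a b := by
  rw [Set.uIcc_of_le (by linarith)] at hy
  refine ⟨by simp [hc], by simpa [abs_le] using hy, fun h => ?_⟩
  have := congrArg Complex.re h
  simp at this
  simp [this] at hc
  linarith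

section rect

variable {a b : ℝ} {f g : ℂ → ℂ}

lemma contH (ha : 0 < a) (hb : 0 < b) (hf : ContinuousOn f (pRect a b)) {c : ℝ} (hc : |c| = b) :
    ContinuousOn (fun x : ℝ => f (x + c * I)) (Set.uIcc (-a) a) :=
  hf.comp (by fun_prop) fun _ hx => mem_pRect_h ha hb hx hc

lemma contV (ha : 0 < a) (hb : 0 < b) (hf : ContinuousOn f (pRect a b)) {c : ℝ} (hc : |c| = a) :
    ContinuousOn (fun y : ℝ => f (c + y * I)) (Set.uIcc (-b) b) :=
  hf.comp (by fun_prop) fun _ hy => mem_pRect_v ha hb hy hc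

lemma abs_neg_self' (hb : 0 < b) : |(-b)| = b := by rw [abs_neg, abs_of_pos hb]

lemma rectInt_congr (ha : 0 < a) (hb : 0 < b) (h : Set.EqOn f g (pRect a b)) :
    rectInt a b f = rectInt a b g := by
  unfold rectInt
  congr 1
  · congr 1
    · congr 1
      · exact intervalIntegral.integral_congr fun x hx =>
          h (mem_pRect_h ha hb hx (abs_neg_self' hb))
      · exact intervalIntegral.integral_congr fun x hx =>
          h (mem_pRect_h ha hb hx (abs_of_pos hb))
    · congr 1
      exact intervalIntegral.integral_congr fun x hx =>
          h (mem_pRect_v ha hb hx (abs_of_pos ha))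
  · congr 1
    exact intervalIntegral.integral_congr fun x hx =>
          h (mem_pRect_v ha hb hx (abs_neg_self' ha))

lemma rectInt_add (ha : 0 < a) (hb : 0 < b) (hf : ContinuousOn f (pRect a b))
    (hg : ContinuousOn g (pRect a b)) :
    rectInt a b (fun t => f t + g t) = rectInt a b f + rectInt a b g := by
  have b1 := abs_neg_self' hb
  have b2 := abs_of_pos hb
  have a1 := abs_neg_self' ha
  have a2 := abs_of_pos ha
  unfold rectInt
  rw [intervalIntegral.integral_add (contH ha hb hf b1).intervalIntegrable
      (contH ha hb hg b1).intervalIntegrable,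
    intervalIntegral.integral_add (contH ha hb hf b2).intervalIntegrable
      (contH ha hb hg b2).intervalIntegrable,
    intervalIntegral.integral_add (contV ha hb hf a1).intervalIntegrable
      (contV ha hb hg a1).intervalIntegrable,
    intervalIntegral.integral_add (contV ha hb hf a2).intervalIntegrable
      (contV ha hb hg a2).intervalIntegrable]
  ring

lemma rectInt_const_mul (c : ℂ) : rectInt a b (fun t => c * f t) = c * rectInt a b f := by
  simp only [rectInt, intervalIntegral.integral_const_mul]
  ring

lemma rectInt_of_hasDerivAt (ha : 0 < a) (hb : 0 < b) (hf : ContinuousOn f (pRect a b))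
    (h : ∀ t ∈ pRect a b, HasDerivAt g (f t) t) : rectInt a b f = 0 := by
  have hH : ∀ c : ℝ, |c| = b → (∫ x in (-a)..a, f (x + c * I)) =
      g (a + c * I) - g ((-a : ℝ) + c * I) := fun c hc =>
    intervalIntegral.integral_eq_sub_of_hasDerivAt (f := fun x : ℝ => g (x + c * I))
      (fun x hx => by
        have h1 := h _ (mem_pRect_h ha hb hx hc)
        have h2 : HasDerivAt (fun x : ℝ => (x + c * I : ℂ)) 1 x :=
          (Complex.ofRealCLM.hasDerivAt (x := x)).add_const _
        have h3 := h1.comp x h2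
        rw [mul_one] at h3
        exact h3)
      (contH ha hb hf hc).intervalIntegrable
  have hV : ∀ c : ℝ, |c| = a → I * (∫ y in (-b)..b, f (c + y * I)) =
      g (c + b * I) - g (c + (-b : ℝ) * I) := fun c hc => by
    rw [← intervalIntegral.integral_const_mul]
    exact intervalIntegral.integral_eq_sub_of_hasDerivAt (f := fun y : ℝ => g (c + y * I))
      (fun y hy => by
        have h1 := h _ (mem_pRect_v ha hb hy hc)
        have h2 : HasDerivAt (fun y : ℝ => (c + y * I : ℂ)) (1 * I) y :=
          ((Complex.ofRealCLM.hasDerivAt (x := y)).mul_const I).const_add _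
        have h3 := h1.comp y h2
        rw [one_mul, mul_comm] at h3
        exact h3)
      (continuousOn_const.mul (contV ha hb hf hc)).intervalIntegrable
  rw [rectInt, hH _ (abs_neg_self' hb), hH _ (abs_of_pos hb), hV _ (abs_of_pos ha),
    hV _ (abs_neg_self' ha)]
  ring

lemma continuousOn_inv_pRect : ContinuousOn (fun t : ℂ => t⁻¹) (pRect a b) :=
  fun _ ht => (continuousAt_inv₀ ht.2.2).continuousWithinAt

/-- Opposite sides combine to `I` times the integral of a positive function, so the integral of
`1/t` cannot vanish; its exact value `2πi` is not needed. -/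
lemma rectInt_inv_ne_zero (ha : 0 < a) (hb : 0 < b) : rectInt a b (fun t => t⁻¹) ≠ 0 := by
  have hc := continuousOn_inv_pRect (a := a) (b := b)
  have hH : (∫ x in (-a)..a, ((x + (-b : ℝ) * I : ℂ))⁻¹) - (∫ x in (-a)..a, ((x + b * I : ℂ))⁻¹) =
      I * ((∫ x in (-a)..a, 2 * b / (x ^ 2 + b ^ 2) : ℝ) : ℂ) := by
    rw [← intervalIntegral.integral_sub (contH ha hb hc (abs_neg_self' hb)).intervalIntegrable
      (contH ha hb hc (abs_of_pos hb)).intervalIntegrable, ← intervalIntegral.integral_ofReal,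
      ← intervalIntegral.integral_const_mul]
    refine intervalIntegral.integral_congr fun x hx => ?_
    have h1 := (mem_pRect_h ha hb hx (abs_neg_self' hb)).2.2
    have h2 := (mem_pRect_h ha hb hx (abs_of_pos hb)).2.2
    have h3 : (x ^ 2 + b ^ 2 : ℂ) = (x + (-b : ℝ) * I) * (x + b * I) := by
      push_cast; linear_combination (b ^ 2 : ℂ) * Complex.I_sq
    push_cast at h1 h2 h3 ⊢
    rw [h3, inv_sub_inv h1 h2]
    rw [← mul_div_assoc]
    congr 1
    ring
  have hV : I * (∫ y in (-b)..b, ((a + y * I : ℂ))⁻¹) -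
      I * (∫ y in (-b)..b, (((-a : ℝ) + y * I : ℂ))⁻¹) =
      I * ((∫ y in (-b)..b, 2 * a / (a ^ 2 + y ^ 2) : ℝ) : ℂ) := by
    rw [← mul_sub,
      ← intervalIntegral.integral_sub (contV ha hb hc (abs_of_pos ha)).intervalIntegrable
      (contV ha hb hc (abs_neg_self' ha)).intervalIntegrable, ← intervalIntegral.integral_ofReal]
    congr 1
    refine intervalIntegral.integral_congr fun y hy => ?_
    have h1 := (mem_pRect_v ha hb hy (abs_neg_self' ha)).2.2
    have h2 := (mem_pRect_v ha hb hy (abs_of_pos ha)).2.2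
    have h3 : (a ^ 2 + y ^ 2 : ℂ) = -(((-a : ℝ) + y * I) * (a + y * I)) := by
      push_cast; linear_combination (y ^ 2 : ℂ) * Complex.I_sq
    push_cast at h1 h2 h3 ⊢
    rw [h3, inv_sub_inv h2 h1, div_neg, ← neg_div]
    rw [mul_comm (a + y * I : ℂ)]
    congr 1
    ring
  have pH : 0 < ∫ x in (-a)..a, 2 * b / (x ^ 2 + b ^ 2) := by
    have hp : ∀ x : ℝ, 0 < x ^ 2 + b ^ 2 := fun x => by positivity
    refine intervalIntegral.intervalIntegral_pos_of_pos
      (Continuous.intervalIntegrable ?_ _ _) (fun x => div_pos (by positivity) (hp x)) (by linarith)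
    exact continuous_const.div (by fun_prop) fun x => (hp x).ne'
  have pV : 0 < ∫ y in (-b)..b, 2 * a / (a ^ 2 + y ^ 2) := by
    have hp : ∀ y : ℝ, 0 < a ^ 2 + y ^ 2 := fun y => by positivity
    refine intervalIntegral.intervalIntegral_pos_of_pos
      (Continuous.intervalIntegrable ?_ _ _) (fun x => div_pos (by positivity) (hp x)) (by linarith)
    exact continuous_const.div (by fun_prop) fun x => (hp x).ne'
  rw [rectInt, add_sub_assoc, hH, hV, ← mul_add, ← Complex.ofReal_add]
  exact mul_ne_zero I_ne_zero (by exact_mod_cast (add_pos pH pV).ne')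

lemma rectInt_of_differentiableOn (ha : 0 < a) (hb : 0 < b)
    (hf : DifferentiableOn ℂ f {t | |t.re| ≤ a ∧ |t.im| ≤ b}) : rectInt a b f = 0 := by
  have h := Complex.integral_boundary_rect_eq_zero_of_differentiableOn f
    ⟨-a, -b⟩ ⟨a, b⟩ (hf.mono fun t ht => by
      have h1 : t.re ∈ Set.uIcc (-a) a := ht.1
      have h2 : t.im ∈ Set.uIcc (-b) b := ht.2
      rw [Set.uIcc_of_le (by linarith)] at h1 h2
      exact ⟨abs_le.mpr h1, abs_le.mpr h2⟩)
  simp only [smul_eq_mul] at h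
  exact h

/-- If `g` has Laurent expansion `c₀/t³ + c₁/t² + c₂/t + m(t)` on the punctured rectangle and its
boundary integral vanishes, then so does the residue `c₂`. -/
lemma residue_eq_zero_of_rectInt (ha : 0 < a) (hb : 0 < b) {c₀ c₁ c₂ : ℂ} {m : ℂ → ℂ}
    (hm : DifferentiableOn ℂ m {t | |t.re| ≤ a ∧ |t.im| ≤ b})
    (hg : ∀ t ∈ pRect a b, g t = (c₀ / t ^ 3 + c₁ / t ^ 2) + (c₂ * t⁻¹ + m t))
    (hI : rectInt a b g = 0) : c₂ = 0 := by
  have hmc : ContinuousOn m (pRect a b) := hm.continuousOn.mono fun t ht => ⟨ht.1, ht.2.1⟩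
  have hpc : ContinuousOn (fun t : ℂ => c₀ / t ^ 3 + c₁ / t ^ 2) (pRect a b) := by
    refine ContinuousOn.add ?_ ?_ <;>
      exact continuousOn_const.div (by fun_prop) fun t ht => pow_ne_zero _ ht.2.2
  have hcc : ContinuousOn (fun t : ℂ => c₂ * t⁻¹) (pRect a b) :=
    continuousOn_const.mul continuousOn_inv_pRect
  have hp : rectInt a b (fun t : ℂ => c₀ / t ^ 3 + c₁ / t ^ 2) = 0 := by
    refine rectInt_of_hasDerivAt (g := fun t => -(c₀ / 2) * (t⁻¹) ^ 2 + -c₁ * t⁻¹) ha hb hpc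
      fun t ht => ?_
    have hi := hasDerivAt_inv ht.2.2
    have h := ((hi.fun_pow 2).const_mul (-(c₀ / 2))).add (hi.const_mul (-c₁))
    refine h.congr_deriv ?_
    have := ht.2.2
    field_simp
    push_cast
    field_simp
  rw [rectInt_congr ha hb hg, rectInt_add (g := fun t => c₂ * t⁻¹ + m t) ha hb hpc (hcc.add hmc),
    rectInt_add ha hb hcc hmc,
    rectInt_const_mul, hp, rectInt_of_differentiableOn ha hb hm, zero_add, add_zero] at hI
  exact (mul_eq_zero.mp hI).resolve_right (rectInt_inv_ne_zero ha hb)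

end rect

/-- Over the boundary of `[-1/2, 1/2] × [-Im τ/2, Im τ/2]` the vertical sides cancel by the
period `1`; the horizontal ones differ by a shift by `τ`, which by `1`-periodicity may be
replaced by the vertical shift `i Im τ`. No continuity is needed. -/
lemma rectInt_eq_zero_of_periodic {τ : ℂ} {g : ℂ → ℂ}
    (h1 : ∀ t, g (t + 1) = g t) (h2 : ∀ t, g (t + τ) = g t) :
    rectInt (1 / 2) (τ.im / 2) g = 0 := by
  have hV : (∫ y in (-(τ.im / 2))..(τ.im / 2), g ((1 / 2 : ℝ) + y * I)) =
      ∫ y in (-(τ.im / 2))..(τ.im / 2), g ((-(1 / 2) : ℝ) + y * I) := by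
    refine intervalIntegral.integral_congr fun y _ => ?_
    rw [← h1 ((-(1 / 2) : ℝ) + y * I)]
    congr 1
    push_cast
    ring
  have hH : (∫ x in (-(1 / 2) : ℝ)..(1 / 2), g (x + (τ.im / 2 : ℝ) * I)) =
      ∫ x in (-(1 / 2) : ℝ)..(1 / 2), g (x + (-(τ.im / 2) : ℝ) * I) := by
    set G : ℝ → ℂ := fun x => g (x + (-(τ.im / 2) : ℝ) * I) with hG
    have hper : Function.Periodic G 1 := fun x => by
      simp only [hG]
      rw [← h1 (x + (-(τ.im / 2) : ℝ) * I)]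
      congr 1
      push_cast
      ring
    have e : ∀ x : ℝ, g (x + (τ.im / 2 : ℝ) * I) = G (x - τ.re) := fun x => by
      simp only [hG]
      rw [← h2 ((x - τ.re : ℝ) + (-(τ.im / 2) : ℝ) * I)]
      congr 1
      nth_rewrite 4 [← Complex.re_add_im τ]
      push_cast
      ring
    simp only [e]
    rw [intervalIntegral.integral_comp_sub_right]
    have := hper.intervalIntegral_add_eq (-(1 / 2) - τ.re) (-(1 / 2))
    convert this using 2 <;> ring
  rw [rectInt, hV, hH]
  ring

/-! ### The elliptic function `gF` and its Laurent expansion -/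

/-- `F₄` after cancelling `θ(t+z)²`: a constant times `θ(t-z)² θ(t+2z) / θ(t)³`. -/
noncomputable def gF (τ z t : ℂ) : ℂ :=
  thd τ ^ 3 / (th τ (-z) ^ 2 * th τ (2 * z)) *
    (th τ (t - z) ^ 2 * th τ (t + 2 * z)) / th τ t ^ 3

lemma gF_eq {τ z t : ℂ} (hz : th τ z ≠ 0) (htz : th τ (t + z) ≠ 0) : gF τ z t = F₄ τ z t := by
  unfold gF F₄
  by_cases h0 : th τ t = 0
  · simp [h0]
  by_cases h1 : th τ (-z) = 0
  · simp [h1]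
  by_cases h2 : th τ (2 * z) = 0
  · simp [h2]
  field_simp

lemma gF_add_one {τ : ℂ} (hτ : 0 < τ.im) (z t : ℂ) : gF τ z (t + 1) = gF τ z t := by
  unfold gF
  rw [add_sub_right_comm, add_right_comm, th_add_one hτ, th_add_one hτ, th_add_one hτ,
    neg_sq, Odd.neg_pow (by decide), mul_neg, mul_neg, neg_div_neg_eq]

lemma gF_add_tau {τ : ℂ} (hτ : 0 < τ.im) (z t : ℂ) : gF τ z (t + τ) = gF τ z t := by
  unfold gF
  rw [add_sub_right_comm, add_right_comm, th_add_tau hτ, th_add_tau hτ, th_add_tau hτ]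
  have hm : exp (-(2 * Real.pi * I * (t - z))) ^ 2 * exp (-(2 * Real.pi * I * (t + 2 * z))) =
      exp (-(2 * Real.pi * I * t)) ^ 3 := by
    rw [← Complex.exp_nat_mul, ← Complex.exp_nat_mul, ← Complex.exp_add]
    congr 1
    push_cast
    ring
  set M := exp (-(Real.pi * I * τ))
  have hM : -M * exp (-(2 * Real.pi * I * t)) ≠ 0 :=
    mul_ne_zero (neg_ne_zero.mpr (exp_ne_zero _)) (exp_ne_zero _)
  rw [← mul_div_mul_left _ (th τ t ^ 3) (pow_ne_zero 3 hM), ← mul_pow]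
  congr 1
  linear_combination -M ^ 3 * th τ (t - z) ^ 2 * th τ (t + 2 * z) *
    (thd τ ^ 3 / (th τ (-z) ^ 2 * th τ (2 * z))) * hm

lemma isOpen_box (τ : ℂ) : IsOpen {t : ℂ | |t.re| < 1 ∧ |t.im| < τ.im} :=
  (isOpen_lt (Complex.continuous_re.abs) continuous_const).inter
    (isOpen_lt (Complex.continuous_im.abs) continuous_const)

/-- The origin is the only lattice point with `|Re t| < 1` and `|Im t| < Im τ`. -/
lemma eq_zero_of_inLat {τ t : ℂ} (hτ : 0 < τ.im) (hre : |t.re| < 1) (him : |t.im| < τ.im)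
    (h : inLat τ t) : t = 0 := by
  obtain ⟨m, n, rfl⟩ := h
  have hn : n = 0 := by
    simp only [add_im, intCast_im, mul_im, intCast_re, zero_mul, add_zero, zero_add, abs_mul,
      abs_of_pos hτ] at him
    have h1 : |(n : ℝ)| < 1 := by
      by_contra! h
      nlinarith
    exact Int.abs_lt_one_iff.mp (by exact_mod_cast h1)
  subst hn
  have hm : m = 0 := by
    simp at hre
    exact Int.abs_lt_one_iff.mp (by exact_mod_cast hre)
  simp [hm]

/-- Near the origin `gF` has a pole of order at most three with no residue. -/
lemma gF_laurent {τ : ℂ} (hτ : 0 < τ.im) (z : ℂ) : ∃ (c₀ c₁ : ℂ) (m : ℂ → ℂ),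
    DifferentiableOn ℂ m {t | |t.re| < 1 ∧ |t.im| < τ.im} ∧
    ∀ t : ℂ, |t.re| < 1 → |t.im| < τ.im → t ≠ 0 →
      gF τ z t = c₀ / t ^ 3 + c₁ / t ^ 2 + m t := by
  have hth := differentiable_th hτ
  set V : Set ℂ := {t | |t.re| < 1 ∧ |t.im| < τ.im} with hV
  have hVn : V ∈ 𝓝 (0 : ℂ) := (isOpen_box τ).mem_nhds (by simpa [hV] using hτ)
  set S := dslope (th τ) 0 with hS
  have hthS : ∀ t, th τ t = t * S t := fun t => by
    have := sub_smul_dslope (th τ) 0 t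
    rw [th_zero, sub_zero, sub_zero, smul_eq_mul] at this
    exact this.symm
  have hSd : DifferentiableOn ℂ S V :=
    (Complex.differentiableOn_dslope hVn).mpr hth.differentiableOn
  have hS0 : ∀ t ∈ V, S t ≠ 0 := by
    intro t ht h0
    by_cases h : t = 0
    · rw [h, hS, dslope_same] at h0
      exact deriv_th_zero_ne_zero hτ h0
    · exact th_ne_zero hτ (fun hl => h (eq_zero_of_inLat hτ ht.1 ht.2 hl))
        (by rw [hthS, h0, mul_zero])
  set k : ℂ → ℂ := fun t => thd τ ^ 3 / (th τ (-z) ^ 2 * th τ (2 * z)) *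
    (th τ (t - z) ^ 2 * th τ (t + 2 * z)) / S t ^ 3 with hk
  have hkd : DifferentiableOn ℂ k V := by
    refine DifferentiableOn.div (Differentiable.differentiableOn (by fun_prop)) (hSd.fun_pow 3)
      fun t ht => pow_ne_zero _ (hS0 t ht)
  set k₁ := dslope k 0
  set k₂ := dslope k₁ 0
  set m := dslope k₂ 0
  have hk1 : DifferentiableOn ℂ k₁ V := (Complex.differentiableOn_dslope hVn).mpr hkd
  have hk2 : DifferentiableOn ℂ k₂ V := (Complex.differentiableOn_dslope hVn).mpr hk1
  have hm : DifferentiableOn ℂ m V := (Complex.differentiableOn_dslope hVn).mpr hk2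
  have e0 : ∀ t, k t = k 0 + t * k₁ t := fun t => by
    have := sub_smul_dslope k 0 t
    rw [sub_zero, smul_eq_mul] at this
    linear_combination -this
  have e1 : ∀ t, k₁ t = k₁ 0 + t * k₂ t := fun t => by
    have := sub_smul_dslope k₁ 0 t
    rw [sub_zero, smul_eq_mul] at this
    linear_combination -this
  have e2 : ∀ t, k₂ t = k₂ 0 + t * m t := fun t => by
    have := sub_smul_dslope k₂ 0 t
    rw [sub_zero, smul_eq_mul] at this
    linear_combination -this
  have hexp : ∀ t : ℂ, t ≠ 0 →
      gF τ z t = (k 0 / t ^ 3 + k₁ 0 / t ^ 2) + (k₂ 0 * t⁻¹ + m t) := fun t ht => by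
    have h1 : gF τ z t = k t / t ^ 3 := by
      rw [gF, hk, hthS t, mul_pow, div_div, mul_comm (t ^ 3)]
    rw [h1, e0 t, e1 t, e2 t]
    field_simp
    ring
  have hres : k₂ 0 = 0 := by
    refine residue_eq_zero_of_rectInt (a := 1 / 2) (b := τ.im / 2) (by norm_num) (by linarith)
      (hm.mono fun t ht => ⟨by linarith [ht.1], by linarith [ht.2]⟩)
      (fun t ht => hexp t ht.2.2)
      (rectInt_eq_zero_of_periodic (gF_add_one hτ z) (gF_add_tau hτ z))
  refine ⟨k 0, k₁ 0, m, hm, fun t _ _ ht => ?_⟩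
  rw [hexp t ht, hres, zero_mul, zero_add]

/-! ### Integrals over small circles and the theorem -/

lemma circleIntegral_eq_zero_of_laurent {r : ℝ} (hr : 0 < r) {c₀ c₁ : ℂ} {f m : ℂ → ℂ} {V : Set ℂ}
    (hV : Metric.closedBall 0 r ⊆ V) (hm : DifferentiableOn ℂ m V)
    (h : ∀ t ∈ Metric.sphere (0 : ℂ) r, f t = c₀ / t ^ 3 + c₁ / t ^ 2 + m t) :
    (∮ t in C(0, r), f t) = 0 := by
  have hne : ∀ t ∈ Metric.sphere (0 : ℂ) r, t ≠ 0 := fun t ht h0 => by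
    rw [h0, mem_sphere_iff_norm, sub_zero, norm_zero] at ht
    linarith
  have hpow : ∀ (c : ℂ) (n : ℕ), n ≠ 1 →
      CircleIntegrable (fun t => c / t ^ n) 0 r ∧ (∮ t in C(0, r), c / t ^ n) = 0 := by
    intro c n hn
    refine ⟨ContinuousOn.circleIntegrable hr.le
      (continuousOn_const.div (by fun_prop) fun t ht => pow_ne_zero _ (hne t ht)), ?_⟩
    have := circleIntegral.integral_sub_zpow_of_ne (n := -(n : ℤ)) (by omega) 0 0 r
    simp only [sub_zero, zpow_neg, zpow_natCast] at this
    simp only [div_eq_mul_inv]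
    rw [circleIntegral.integral_const_mul, this, mul_zero]
  obtain ⟨i0, z0⟩ := hpow c₀ 3 (by norm_num)
  obtain ⟨i1, z1⟩ := hpow c₁ 2 (by norm_num)
  have hmb := hm.mono hV
  have im : CircleIntegrable m 0 r :=
    (hmb.continuousOn.mono Metric.sphere_subset_closedBall).circleIntegrable hr.le
  have zm : (∮ t in C(0, r), m t) = 0 :=
    (hmb.diffContOnCl_ball subset_rfl).circleIntegral_eq_zero hr.le
  have i01 : CircleIntegrable (fun t => c₀ / t ^ 3 + c₁ / t ^ 2) 0 r := i0.add i1
  rw [circleIntegral.integral_congr hr.le h, circleIntegral.integral_add i01 im,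
    circleIntegral.integral_add i0 i1, z0, z1, zm, add_zero, add_zero]

/-- `F₄` extends to a holomorphic function on `ℂ ∖ (ℤ+τℤ)` (the apparent singularities at
`t ≡ −z` are removable), the extension is doubly periodic for the lattice `ℤ + τℤ`, and
the residue of `F₄` at `t = 0` vanishes. -/
theorem F₄_elliptic_residue_zero (τ z : ℂ) (hτ : 0 < τ.im)
    (hz : ¬ inLat τ z) (h2z : ¬ inLat τ (2 * z)) :
    ∃ g : ℂ → ℂ,
      DifferentiableOn ℂ g {t : ℂ | ¬ inLat τ t} ∧
      (∀ t : ℂ, ¬ inLat τ t → ¬ inLat τ (t + z) → g t = F₄ τ z t) ∧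
      (∀ t : ℂ, ¬ inLat τ t → g (t + 1) = g t ∧ g (t + τ) = g t) ∧
      ∃ ε > 0, ∀ r : ℝ, 0 < r → r < ε → (∮ t in C(0, r), F₄ τ z t) = 0 := by
  have hth := differentiable_th hτ
  refine ⟨gF τ z, ?_, fun t _ htz => gF_eq (th_ne_zero hτ hz) (th_ne_zero hτ htz),
    fun t _ => ⟨gF_add_one hτ z t, gF_add_tau hτ z t⟩, ?_⟩
  · exact DifferentiableOn.div (Differentiable.differentiableOn (by fun_prop))
      (Differentiable.differentiableOn (by fun_prop)) fun t ht => pow_ne_zero _ (th_ne_zero hτ ht)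
  · obtain ⟨c₀, c₁, m, hm, hexp⟩ := gF_laurent hτ z
    -- On a small ball `θ(t+z) ≠ 0` by continuity, and `t` stays in the box on which the
    -- Laurent expansion holds.
    have hnear : ∀ᶠ t in 𝓝 (0 : ℂ), (|t.re| < 1 ∧ |t.im| < τ.im) ∧ th τ (t + z) ≠ 0 := by
      refine ((isOpen_box τ).eventually_mem (by simpa using hτ)).and ?_
      have hc : ContinuousAt (fun t => th τ (t + z)) 0 :=
        (hth.continuous.comp (by fun_prop : Continuous fun t : ℂ => t + z)).continuousAt
      exact hc.eventually_ne (by simpa using th_ne_zero hτ hz)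
    obtain ⟨ε, hε, hball⟩ := Metric.eventually_nhds_iff_ball.mp hnear
    refine ⟨ε, hε, fun r hr hrε => ?_⟩
    have hsub := Metric.closedBall_subset_ball (x := (0 : ℂ)) hrε
    refine circleIntegral_eq_zero_of_laurent hr (c₀ := c₀) (c₁ := c₁)
      (fun t ht => (hball t (hsub ht)).1) hm fun t ht => ?_
    obtain ⟨⟨hre, him⟩, hne⟩ := hball t (hsub (Metric.sphere_subset_closedBall ht))
    rw [← gF_eq (th_ne_zero hτ hz) hne]
    refine hexp t hre him fun h0 => ?_
    rw [h0, mem_sphere_iff_norm, sub_zero, norm_zero] at ht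
    linarith
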